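/- In the group V, every element has order belonging to {1, 2, 3, 4, 6, 8, 12}, and the number of elements of order 2 is 139, of order 3 is 80, of order 4 is 228, of order 6 is 464, of order 8 is 144, and of order 12 is 96. -/

import Mathlib

/-- The simple reflection `s₁` of the Weyl group of `D₄`. -/
def s1 : Matrix (Fin 4) (Fin 4) ℚ := !![-1,0,0,0; 1,1,0,0; 0,0,1,0; 0,0,0,1]

/-- The simple reflection `s₂` of the Weyl group of `D₄`. -/
def s2 : Matrix (Fin 4) (Fin 4) ℚ := !![1,1,0,0; 0,-1,0,0; 0,1,1,0; 0,1,0,1]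

/-- The simple reflection `s₃` of the Weyl group of `D₄`. -/
def s3 : Matrix (Fin 4) (Fin 4) ℚ := !![1,0,0,0; 0,1,1,0; 0,0,-1,0; 0,0,0,1]

/-- The simple reflection `s₄` of the Weyl group of `D₄`. -/
def s4 : Matrix (Fin 4) (Fin 4) ℚ := !![1,0,0,0; 0,1,0,1; 0,0,1,0; 0,0,0,-1]

/-- The order-3 automorphism `s₅` of the Dynkin diagram of `D₄`. -/
def s5 : Matrix (Fin 4) (Fin 4) ℚ := !![0,0,1,0; 0,1,0,0; 0,0,0,1; 1,0,0,0]

/-- The order-2 automorphism `s₆` of the Dynkin diagram of `D₄`. -/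
def s6 : Matrix (Fin 4) (Fin 4) ℚ := !![1,0,0,0; 0,1,0,0; 0,0,0,1; 0,0,1,0]

/-- Integral vectors of rank four, written in coordinates for fast kernel evaluation. -/
@[ext]
structure IntVec where
  x₁ : ℤ
  x₂ : ℤ
  x₃ : ℤ
  x₄ : ℤ
deriving DecidableEq

/-- Integral `4 × 4` matrices, given by their rows. -/
@[ext]
structure IntMat where
  r₁ : IntVec
  r₂ : IntVec
  r₃ : IntVec
  r₄ : IntVec
deriving DecidableEq

namespace IntVec

/-- The row vector `v` times the matrix `A`. -/
def act (v : IntVec) (A : IntMat) : IntVec :=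
  ⟨v.x₁ * A.r₁.x₁ + v.x₂ * A.r₂.x₁ + v.x₃ * A.r₃.x₁ + v.x₄ * A.r₄.x₁,
   v.x₁ * A.r₁.x₂ + v.x₂ * A.r₂.x₂ + v.x₃ * A.r₃.x₂ + v.x₄ * A.r₄.x₂,
   v.x₁ * A.r₁.x₃ + v.x₂ * A.r₂.x₃ + v.x₃ * A.r₃.x₃ + v.x₄ * A.r₄.x₃,
   v.x₁ * A.r₁.x₄ + v.x₂ * A.r₂.x₄ + v.x₃ * A.r₃.x₄ + v.x₄ * A.r₄.x₄⟩

/-- The invariant bilinear form, given by the Cartan matrix of `D₄` with central node `2`. -/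
def form (v w : IntVec) : ℤ :=
  v.x₁ * (2 * w.x₁ - w.x₂) + v.x₂ * (2 * w.x₂ - w.x₁ - w.x₃ - w.x₄) +
    v.x₃ * (2 * w.x₃ - w.x₂) + v.x₄ * (2 * w.x₄ - w.x₂)

/-- The height of a vector: the sum of its coordinates in the basis of simple roots. -/
def height (v : IntVec) : ℤ := v.x₁ + v.x₂ + v.x₃ + v.x₄

/-- The positive roots of `D₄`. -/
def posRoots : List IntVec :=
  [⟨1,0,0,0⟩, ⟨0,1,0,0⟩, ⟨0,0,1,0⟩, ⟨0,0,0,1⟩, ⟨1,1,0,0⟩, ⟨0,1,1,0⟩, ⟨0,1,0,1⟩,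
   ⟨1,1,1,0⟩, ⟨1,1,0,1⟩, ⟨0,1,1,1⟩, ⟨1,1,1,1⟩, ⟨1,2,1,1⟩]

/-- The roots of `D₄`. -/
def roots : List IntVec :=
  posRoots ++ posRoots.map fun v => ⟨-v.x₁, -v.x₂, -v.x₃, -v.x₄⟩

end IntVec

namespace IntMat

open IntVec

/-- Matrix multiplication. -/
def mul (A B : IntMat) : IntMat :=
  ⟨A.r₁.act B, A.r₂.act B, A.r₃.act B, A.r₄.act B⟩

/-- The identity matrix. -/
def one : IntMat := ⟨⟨1,0,0,0⟩, ⟨0,1,0,0⟩, ⟨0,0,1,0⟩, ⟨0,0,0,1⟩⟩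

/-- The quadruples of roots whose Gram matrix is the Cartan matrix of `D₄`. -/
def auts : List IntMat :=
  roots.flatMap fun b =>
    let n := roots.filter fun v => form v b = -1
    n.flatMap fun a =>
      let m := n.filter fun v => form a v = 0
      m.flatMap fun c =>
        (m.filter fun v => form c v = 0).map fun d => ⟨a, b, c, d⟩

/-- A vector whose orbit under the automorphism group is regular. -/
def regularVec : IntVec := ⟨1, 3, 5, 11⟩

/-- The least `m` with `k < m ≤ k + n` for which `m - k` applications of `A` take `v` to
`regularVec`, and `0` if there is none. -/
def returnTime (A : IntMat) : ℕ → ℕ → IntVec → ℕ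
  | 0, _, _ => 0
  | n + 1, k, v =>
    let w := v.act A
    if w = regularVec then k + 1 else returnTime A n (k + 1) w

/-- The order of an automorphism `A` if it is at most `12`, and `0` otherwise. -/
def ord (A : IntMat) : ℕ := A.returnTime 12 0 regularVec

/-- The generators of the automorphism group of `D₄`. -/
def S : Fin 6 → IntMat := ![
  ⟨⟨-1,0,0,0⟩, ⟨1,1,0,0⟩, ⟨0,0,1,0⟩, ⟨0,0,0,1⟩⟩,
  ⟨⟨1,1,0,0⟩, ⟨0,-1,0,0⟩, ⟨0,1,1,0⟩, ⟨0,1,0,1⟩⟩,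
  ⟨⟨1,0,0,0⟩, ⟨0,1,1,0⟩, ⟨0,0,-1,0⟩, ⟨0,0,0,1⟩⟩,
  ⟨⟨1,0,0,0⟩, ⟨0,1,0,1⟩, ⟨0,0,1,0⟩, ⟨0,0,0,-1⟩⟩,
  ⟨⟨0,0,1,0⟩, ⟨0,1,0,0⟩, ⟨0,0,0,1⟩, ⟨1,0,0,0⟩⟩,
  ⟨⟨1,0,0,0⟩, ⟨0,1,0,0⟩, ⟨0,0,0,1⟩, ⟨0,0,1,0⟩⟩]

/-- The automorphisms of the Dynkin diagram of `D₄`. -/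
def diagramAuts : List IntMat :=
  [one, S 4, (S 4).mul (S 4), S 5, (S 4).mul (S 5), ((S 4).mul (S 4)).mul (S 5)]

/-- The height of the image under `A` of the sum of the positive roots. -/
def height (A : IntMat) : ℤ :=
  6 * A.r₁.height + 10 * A.r₂.height + 6 * A.r₃.height + 6 * A.r₄.height

/-- The matrix with rational entries underlying `A`. -/
def toMatrix (A : IntMat) : Matrix (Fin 4) (Fin 4) ℚ :=
  !![(A.r₁.x₁ : ℚ), A.r₁.x₂, A.r₁.x₃, A.r₁.x₄; A.r₂.x₁, A.r₂.x₂, A.r₂.x₃, A.r₂.x₄;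
    A.r₃.x₁, A.r₃.x₂, A.r₃.x₃, A.r₃.x₄; A.r₄.x₁, A.r₄.x₂, A.r₄.x₃, A.r₄.x₄]

/-- `A` preserves the invariant bilinear form. -/
def IsAut (A : IntMat) : Prop := ∀ v w : IntVec, form (v.act A) (w.act A) = form v w

theorem toMatrix_injective : Function.Injective toMatrix := by
  intro A B h
  have key (i j : Fin 4) : A.toMatrix i j = B.toMatrix i j := by rw [h]
  ext
  exacts [by simpa [toMatrix] using key 0 0, by simpa [toMatrix] using key 0 1,
    by simpa [toMatrix] using key 0 2, by simpa [toMatrix] using key 0 3,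
    by simpa [toMatrix] using key 1 0, by simpa [toMatrix] using key 1 1,
    by simpa [toMatrix] using key 1 2, by simpa [toMatrix] using key 1 3,
    by simpa [toMatrix] using key 2 0, by simpa [toMatrix] using key 2 1,
    by simpa [toMatrix] using key 2 2, by simpa [toMatrix] using key 2 3,
    by simpa [toMatrix] using key 3 0, by simpa [toMatrix] using key 3 1,
    by simpa [toMatrix] using key 3 2, by simpa [toMatrix] using key 3 3]

theorem toMatrix_one : toMatrix one = 1 := by
  ext i j
  fin_cases i <;> fin_cases j <;> simp [toMatrix, one]

theorem toMatrix_mul (A B : IntMat) : (A.mul B).toMatrix = A.toMatrix * B.toMatrix := by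
  ext i j
  fin_cases i <;> fin_cases j <;>
    simp [toMatrix, mul, act, Matrix.mul_apply, Fin.sum_univ_four]

theorem act_one (v : IntVec) : v.act one = v := by
  simp [act, one]

theorem act_mul (v : IntVec) (A B : IntMat) : v.act (A.mul B) = (v.act A).act B := by
  simp only [act, mul, IntVec.mk.injEq]
  refine ⟨?_, ?_, ?_, ?_⟩ <;> ring

theorem isAut_one : IsAut one := fun v w => by simp only [act_one]

theorem IsAut.mul {A B : IntMat} (hA : A.IsAut) (hB : B.IsAut) : (A.mul B).IsAut := fun v w => by
  rw [act_mul, act_mul, hB, hA]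

theorem isAut_S (i : Fin 6) : (S i).IsAut := by
  intro v w
  fin_cases i <;> simp [S, act, form] <;> ring

theorem mem_roots_iff (v : IntVec) : v ∈ roots ↔ form v v = 2 := by
  constructor
  · revert v
    decide +kernel
  · obtain ⟨a, b, c, d⟩ := v
    intro h
    have h' : (2 * a - b) ^ 2 + (2 * c - b) ^ 2 + (2 * d - b) ^ 2 + b ^ 2 = 4 := by
      simp only [form] at h
      linear_combination 2 * h
    have hb := abs_le_of_sq_le_sq' (a := b) (b := 2) (by nlinarith) (by norm_num)
    have ha := abs_le_of_sq_le_sq' (a := 2 * a - b) (b := 2) (by nlinarith) (by norm_num)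
    have hc := abs_le_of_sq_le_sq' (a := 2 * c - b) (b := 2) (by nlinarith) (by norm_num)
    have hd := abs_le_of_sq_le_sq' (a := 2 * d - b) (b := 2) (by nlinarith) (by norm_num)
    have small : ∀ a ∈ Finset.Icc (-2 : ℤ) 2, ∀ b ∈ Finset.Icc (-2 : ℤ) 2,
        ∀ c ∈ Finset.Icc (-2 : ℤ) 2, ∀ d ∈ Finset.Icc (-2 : ℤ) 2,
        form ⟨a, b, c, d⟩ ⟨a, b, c, d⟩ = 2 → (⟨a, b, c, d⟩ : IntVec) ∈ roots := by
      decide +kernel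
    exact small a (by simp; omega) b (by simp; omega) c (by simp; omega) d (by simp; omega) h

theorem mem_auts_iff (A : IntMat) : A ∈ auts ↔ A.IsAut := by
  obtain ⟨a, b, c, d⟩ := A
  have key : (⟨a, b, c, d⟩ : IntMat) ∈ auts ↔
      form b b = 2 ∧ (form a a = 2 ∧ form a b = -1) ∧
        ((form c c = 2 ∧ form c b = -1) ∧ form a c = 0) ∧
        ((form d d = 2 ∧ form d b = -1) ∧ form a d = 0) ∧ form c d = 0 := by
    simp only [auts, List.mem_flatMap, List.mem_map, List.mem_filter, mem_roots_iff,
      decide_eq_true_eq, IntMat.mk.injEq]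
    aesop
  rw [key]
  constructor
  · rintro ⟨hbb, ⟨haa, hab⟩, ⟨⟨hcc, hcb⟩, hac⟩, ⟨⟨hdd, hdb⟩, had⟩, hcd⟩ v w
    obtain ⟨v₁, v₂, v₃, v₄⟩ := v
    obtain ⟨w₁, w₂, w₃, w₄⟩ := w
    simp only [form, act] at *
    linear_combination v₁ * w₁ * haa + v₂ * w₂ * hbb + v₃ * w₃ * hcc + v₄ * w₄ * hdd +
      (v₁ * w₂ + v₂ * w₁) * hab + (v₃ * w₂ + v₂ * w₃) * hcb + (v₄ * w₂ + v₂ * w₄) * hdb +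
      (v₁ * w₃ + v₃ * w₁) * hac + (v₁ * w₄ + v₄ * w₁) * had + (v₃ * w₄ + v₄ * w₃) * hcd
  · intro h
    have ea : act ⟨1,0,0,0⟩ ⟨a, b, c, d⟩ = a := by simp [act]
    have eb : act ⟨0,1,0,0⟩ ⟨a, b, c, d⟩ = b := by simp [act]
    have ec : act ⟨0,0,1,0⟩ ⟨a, b, c, d⟩ = c := by simp [act]
    have ed : act ⟨0,0,0,1⟩ ⟨a, b, c, d⟩ = d := by simp [act]
    have hform {v w x y : IntVec} (hx : act v ⟨a, b, c, d⟩ = x) (hy : act w ⟨a, b, c, d⟩ = y) :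
        form x y = form v w := by
      rw [← h v w, hx, hy]
    exact ⟨hform eb eb, ⟨hform ea ea, hform ea eb⟩, ⟨⟨hform ec ec, hform ec eb⟩, hform ea ec⟩,
      ⟨⟨hform ed ed, hform ed eb⟩, hform ea ed⟩, hform ec ed⟩

theorem nodup_flatMap_of_leftInverse {α β : Type*} {l : List α} {f : α → List β} (g : β → α)
    (hl : l.Nodup) (hf : ∀ x, (f x).Nodup) (hg : ∀ x, ∀ y ∈ f x, g y = x) :
    (l.flatMap f).Nodup :=
  List.nodup_flatMap.2 ⟨fun x _ => hf x, hl.imp fun hne y hy hy' =>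
    hne ((hg _ y hy).symm.trans (hg _ y hy'))⟩

theorem nodup_auts : auts.Nodup := by
  have hr : roots.Nodup := by decide +kernel
  refine nodup_flatMap_of_leftInverse IntMat.r₂ hr (fun b => ?_) (by simp; grind)
  refine nodup_flatMap_of_leftInverse IntMat.r₁ (hr.filter _) (fun a => ?_) (by simp; grind)
  refine nodup_flatMap_of_leftInverse IntMat.r₃ ((hr.filter _).filter _) (fun c => ?_)
    (by simp; grind)
  exact (((hr.filter _).filter _).filter _).map fun d d' h => congrArg IntMat.r₄ h

theorem eq_one_of_regularVec_act :
    ∀ A ∈ auts, regularVec.act A = regularVec → A = one := by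
  decide +kernel

theorem descent : ∀ A ∈ auts, A.height ≤ 28 ∧ (A ∈ diagramAuts ∨ A.r₁.height < 0 ∨
    A.r₂.height < 0 ∨ A.r₃.height < 0 ∨ A.r₄.height < 0) := by
  decide +kernel

theorem ord_mem : ∀ A ∈ auts, A.ord ∈ [1, 2, 3, 4, 6, 8, 12] := by
  decide +kernel

theorem count_ord : [2, 3, 4, 6, 8, 12].map (fun k => (auts.map ord).count k) =
    [139, 80, 228, 464, 144, 96] := by
  decide +kernel

theorem returnTime_spec (A : IntMat) (n k : ℕ)
    (h : A.returnTime n k ((fun v => v.act A)^[k] regularVec) ≠ 0) :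
    k < A.returnTime n k ((fun v => v.act A)^[k] regularVec) ∧
    (fun v => v.act A)^[A.returnTime n k ((fun v => v.act A)^[k] regularVec)] regularVec =
      regularVec ∧
    ∀ m, k < m → m < A.returnTime n k ((fun v => v.act A)^[k] regularVec) →
      (fun v => v.act A)^[m] regularVec ≠ regularVec := by
  induction n generalizing k with
  | zero => exact absurd rfl h
  | succ n ih =>
    have hs : ((fun v => v.act A)^[k] regularVec).act A =
      (fun v => v.act A)^[k + 1] regularVec := (Function.iterate_succ_apply' (fun v => act v A) k _).symm
    simp only [returnTime, hs] at h ⊢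
    split_ifs at h ⊢ with hk
    · exact ⟨by omega, hk, by omega⟩
    · obtain ⟨h1, h2, h3⟩ := ih (k + 1) h
      refine ⟨by omega, h2, fun m hm hm' => ?_⟩
      rcases eq_or_lt_of_le (Nat.succ_le_of_lt hm) with rfl | hlt
      · exact hk
      · exact h3 m hlt hm'

end IntMat

open IntMat

section Group

variable {u : Fin 6 → GL (Fin 4) ℚ}

theorem exists_isAut_pow (g : GL (Fin 4) ℚ) {A : IntMat} (hA : A.IsAut)
    (hg : (g : Matrix (Fin 4) (Fin 4) ℚ) = A.toMatrix) (k : ℕ) :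
    ∃ B : IntMat, B.IsAut ∧ ((g ^ k : GL (Fin 4) ℚ) : Matrix (Fin 4) (Fin 4) ℚ) = B.toMatrix ∧
      IntMat.regularVec.act B = (fun v => v.act A)^[k] IntMat.regularVec := by
  induction k with
  | zero => exact ⟨one, isAut_one, by simp [toMatrix_one], act_one _⟩
  | succ k ih =>
    obtain ⟨B, hB, hgB, hv⟩ := ih
    refine ⟨B.mul A, hB.mul hA, ?_, ?_⟩
    · rw [pow_succ, Units.val_mul, hgB, hg, toMatrix_mul]
    · rw [act_mul, hv, Function.iterate_succ_apply']

theorem pow_eq_one_iff_iterate (g : GL (Fin 4) ℚ) {A : IntMat} (hA : A.IsAut)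
    (hg : (g : Matrix (Fin 4) (Fin 4) ℚ) = A.toMatrix) (k : ℕ) :
    g ^ k = 1 ↔ (fun v => v.act A)^[k] regularVec = regularVec := by
  obtain ⟨B, hB, hgB, hv⟩ := exists_isAut_pow g hA hg k
  rw [← hv, ← Units.val_inj, hgB, Units.val_one, ← toMatrix_one, toMatrix_injective.eq_iff]
  refine ⟨?_, eq_one_of_regularVec_act B ((mem_auts_iff B).2 hB)⟩
  rintro rfl
  exact act_one _

theorem orderOf_eq_ord (g : GL (Fin 4) ℚ) {A : IntMat} (hA : A.IsAut)
    (hg : (g : Matrix (Fin 4) (Fin 4) ℚ) = A.toMatrix) : orderOf g = A.ord := by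
  have h0 : A.ord ≠ 0 := by
    intro h
    have := ord_mem A ((mem_auts_iff A).2 hA)
    simp [h] at this
  obtain ⟨h1, h2, h3⟩ := returnTime_spec A 12 0 h0
  refine (orderOf_eq_iff (Nat.pos_of_ne_zero h0)).2 ⟨(pow_eq_one_iff_iterate g hA hg _).2 h2, ?_⟩
  exact fun m hm hm' h => h3 m hm' hm ((pow_eq_one_iff_iterate g hA hg m).1 h)

theorem exists_isAut_of_mem_closure
    (hu : ∀ i, (u i : Matrix (Fin 4) (Fin 4) ℚ) = (S i).toMatrix) {g : GL (Fin 4) ℚ}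
    (hg : g ∈ Subgroup.closure (Set.range u)) :
    ∃ A : IntMat, A.IsAut ∧ (g : Matrix (Fin 4) (Fin 4) ℚ) = A.toMatrix := by
  induction hg using Subgroup.closure_induction'' with
  | mem x hx =>
    obtain ⟨i, rfl⟩ := hx
    exact ⟨S i, isAut_S i, hu i⟩
  | inv_mem x hx =>
    obtain ⟨i, rfl⟩ := hx
    have hS : ∀ i, (S i).ord ∈ [2, 3] := by decide +kernel
    have h6 : u i ^ 6 = 1 := by
      apply orderOf_dvd_iff_pow_eq_one.1
      rw [orderOf_eq_ord _ (isAut_S i) (hu i)]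
      have := hS i
      simp only [List.mem_cons, List.not_mem_nil, or_false] at this
      rcases this with h | h <;> rw [h] <;> norm_num
    rw [inv_eq_of_mul_eq_one_left (a := u i ^ 5) (by rw [← pow_succ, h6])]
    obtain ⟨B, hB, hgB, -⟩ := exists_isAut_pow (u i) (isAut_S i) (hu i) 5
    exact ⟨B, hB, hgB⟩
  | one => exact ⟨one, isAut_one, by simp [toMatrix_one]⟩
  | mul x y _ _ hx hy =>
    obtain ⟨A, hA, hxA⟩ := hx
    obtain ⟨B, hB, hyB⟩ := hy
    exact ⟨A.mul B, hA.mul hB, by rw [Units.val_mul, hxA, hyB, toMatrix_mul]⟩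

theorem exists_mem_closure_of_isAut
    (hu : ∀ i, (u i : Matrix (Fin 4) (Fin 4) ℚ) = (S i).toMatrix) {A : IntMat} (hA : A.IsAut) :
    ∃ g ∈ Subgroup.closure (Set.range u), (g : Matrix (Fin 4) (Fin 4) ℚ) = A.toMatrix := by
  have hmem (i : Fin 6) : u i ∈ Subgroup.closure (Set.range u) :=
    Subgroup.subset_closure ⟨i, rfl⟩
  generalize hn : (28 - A.height).toNat = n
  induction n using Nat.strong_induction_on generalizing A with
  | _ n ih =>
  have hd := (descent A ((mem_auts_iff A).2 hA)).2
  have step (i : Fin 6) (h : A.height < ((S i).mul A).height) :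
      ∃ g ∈ Subgroup.closure (Set.range u), (g : Matrix (Fin 4) (Fin 4) ℚ) = A.toMatrix := by
    have hSA := (isAut_S i).mul hA
    have hle := (descent _ ((mem_auts_iff _).2 hSA)).1
    obtain ⟨g, hg, hgA⟩ := ih _ (by omega) hSA rfl
    refine ⟨(u i)⁻¹ * g, mul_mem (inv_mem (hmem i)) hg, ?_⟩
    rw [Units.val_mul, hgA, toMatrix_mul, ← hu i, Units.inv_mul_cancel_left]
  rcases hd with hd | hd | hd | hd | hd
  · have h5 := hmem 4
    have h6 := hmem 5
    simp only [diagramAuts, List.mem_cons, List.not_mem_nil, or_false] at hd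
    rcases hd with rfl | rfl | rfl | rfl | rfl | rfl
    · exact ⟨1, one_mem _, by simp [toMatrix_one]⟩
    · exact ⟨_, h5, hu 4⟩
    · exact ⟨_, mul_mem h5 h5, by simp [toMatrix_mul, hu]⟩
    · exact ⟨_, h6, hu 5⟩
    · exact ⟨_, mul_mem h5 h6, by simp [toMatrix_mul, hu]⟩
    · exact ⟨_, mul_mem (mul_mem h5 h5) h6, by simp [toMatrix_mul, hu]⟩
  on_goal 1 => apply step 0
  on_goal 2 => apply step 1
  on_goal 3 => apply step 2
  on_goal 4 => apply step 3
  all_goals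
    simp only [IntVec.height] at hd
    simp [IntMat.height, IntVec.height, S, IntMat.mul, IntVec.act]
    omega

theorem card_orderOf_eq
    (hu : ∀ i, (u i : Matrix (Fin 4) (Fin 4) ℚ) = (S i).toMatrix) (k : ℕ) :
    Nat.card {g : GL (Fin 4) ℚ // g ∈ Subgroup.closure (Set.range u) ∧ orderOf g = k} =
      (auts.map ord).count k := by
  have himage : (fun g : GL (Fin 4) ℚ => (g : Matrix (Fin 4) (Fin 4) ℚ)) ''
      {g | g ∈ Subgroup.closure (Set.range u) ∧ orderOf g = k} =
      toMatrix '' ((auts.filter fun A => A.ord = k).toFinset : Set IntMat) := by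
    ext M
    simp only [Set.mem_image, Set.mem_ofPred_eq, Finset.mem_coe, List.mem_toFinset,
      List.mem_filter, mem_auts_iff, decide_eq_true_eq]
    constructor
    · rintro ⟨g, ⟨hg, hk⟩, rfl⟩
      obtain ⟨A, hA, hgA⟩ := exists_isAut_of_mem_closure hu hg
      exact ⟨A, ⟨hA, by rw [← orderOf_eq_ord g hA hgA, hk]⟩, hgA.symm⟩
    · rintro ⟨A, ⟨hA, hk⟩, rfl⟩
      obtain ⟨g, hg, hgA⟩ := exists_mem_closure_of_isAut hu hA
      exact ⟨g, ⟨hg, by rw [orderOf_eq_ord g hA hgA, hk]⟩, hgA⟩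
  have hcard := congrArg Set.ncard himage
  rw [Set.ncard_image_of_injective _ Units.val_injective,
    Set.ncard_image_of_injective _ toMatrix_injective, Set.ncard_coe_finset,
    List.toFinset_card_of_nodup (nodup_auts.filter _)] at hcard
  rw [List.count, List.countP_map, List.countP_eq_length_filter]
  exact hcard.trans rfl

end Group

/-- Orders of elements in the automorphism group `V` of the root system `D₄`:
every element has order in `{1,2,3,4,6,8,12}`, and the numbers of elements of order
`2, 3, 4, 6, 8, 12` are `139, 80, 228, 464, 144, 96` respectively. -/
theorem autD4_element_orders (u₁ u₂ u₃ u₄ u₅ u₆ : GL (Fin 4) ℚ)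
    (h₁ : (u₁ : Matrix (Fin 4) (Fin 4) ℚ) = s1)
    (h₂ : (u₂ : Matrix (Fin 4) (Fin 4) ℚ) = s2)
    (h₃ : (u₃ : Matrix (Fin 4) (Fin 4) ℚ) = s3)
    (h₄ : (u₄ : Matrix (Fin 4) (Fin 4) ℚ) = s4)
    (h₅ : (u₅ : Matrix (Fin 4) (Fin 4) ℚ) = s5)
    (h₆ : (u₆ : Matrix (Fin 4) (Fin 4) ℚ) = s6) :
    (∀ g ∈ (Subgroup.closure {u₁, u₂, u₃, u₄, u₅, u₆} : Subgroup (GL (Fin 4) ℚ)),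
      orderOf g ∈ ({1, 2, 3, 4, 6, 8, 12} : Set ℕ)) ∧
    Nat.card {g : GL (Fin 4) ℚ //
      g ∈ Subgroup.closure {u₁, u₂, u₃, u₄, u₅, u₆} ∧ orderOf g = 2} = 139 ∧
    Nat.card {g : GL (Fin 4) ℚ //
      g ∈ Subgroup.closure {u₁, u₂, u₃, u₄, u₅, u₆} ∧ orderOf g = 3} = 80 ∧
    Nat.card {g : GL (Fin 4) ℚ //
      g ∈ Subgroup.closure {u₁, u₂, u₃, u₄, u₅, u₆} ∧ orderOf g = 4} = 228 ∧
    Nat.card {g : GL (Fin 4) ℚ //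
      g ∈ Subgroup.closure {u₁, u₂, u₃, u₄, u₅, u₆} ∧ orderOf g = 6} = 464 ∧
    Nat.card {g : GL (Fin 4) ℚ //
      g ∈ Subgroup.closure {u₁, u₂, u₃, u₄, u₅, u₆} ∧ orderOf g = 8} = 144 ∧
    Nat.card {g : GL (Fin 4) ℚ //
      g ∈ Subgroup.closure {u₁, u₂, u₃, u₄, u₅, u₆} ∧ orderOf g = 12} = 96 := by
  have hu : ∀ i, ((![u₁, u₂, u₃, u₄, u₅, u₆] i : GL (Fin 4) ℚ) : Matrix (Fin 4) (Fin 4) ℚ) =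
      (S i).toMatrix := by
    intro i
    fin_cases i
    · simp [h₁, s1, S, toMatrix]
    · simp [h₂, s2, S, toMatrix]
    · simp [h₃, s3, S, toMatrix]
    · simp [h₄, s4, S, toMatrix]
    · simp [h₅, s5, S, toMatrix]
    · simp [h₆, s6, S, toMatrix]
  have hrange : ({u₁, u₂, u₃, u₄, u₅, u₆} : Set (GL (Fin 4) ℚ)) =
      Set.range ![u₁, u₂, u₃, u₄, u₅, u₆] := by
    simp only [Matrix.range_cons, Matrix.range_empty, Set.union_empty, Set.singleton_union]
  have hcount := count_ord
  simp only [List.map_cons, List.map_nil, List.cons.injEq, and_true] at hcount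
  simp only [hrange, card_orderOf_eq hu]
  refine ⟨fun g hg => ?_, hcount⟩
  obtain ⟨A, hA, hgA⟩ := exists_isAut_of_mem_closure hu hg
  rw [orderOf_eq_ord g hA hgA]
  simpa using ord_mem A ((mem_auts_iff A).2 hA)
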